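/- arXiv:2512.12954 — 7 statements merged into one kernel-verified Lean document; each statement's English description precedes it below -/
import Mathlib

section
/- Let H be a real Hilbert space, let γ > 0, and let A₁, A₂ : H ⇉ H be maximally monotone and paramonotone set-valued operators. Let T_γ := Id − J_{γA₁} + J_{γA₂} ∘ (2J_{γA₁} − Id) be the Douglas–Rachford operator, and set P := zer(A₁ + A₂) and D := zer(A₁⁻¹ − A₂⁻¹ ∘ (−Id)). Then Fix T_γ = P + γD, where P + γD = {x + γy : x ∈ P, y ∈ D}. -/
open scoped Pointwise RealInnerProductSpace

variable {H : Type*}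

/-- A set-valued operator is monotone. -/
def SVMonotone [NormedAddCommGroup H] [InnerProductSpace ℝ H] (A : H → Set H) : Prop :=
  ∀ ⦃x y u v : H⦄, u ∈ A x → v ∈ A y → 0 ≤ ⟪x - y, u - v⟫

/-- The graph of a set-valued operator. -/
def SVGraph (A : H → Set H) : Set (H × H) := {p | p.2 ∈ A p.1}

/-- A set-valued operator is maximally monotone. -/
def MaxMonotone [NormedAddCommGroup H] [InnerProductSpace ℝ H] (A : H → Set H) : Prop :=
  SVMonotone A ∧
    ∀ B : H → Set H, SVMonotone B → SVGraph A ⊆ SVGraph B → SVGraph B = SVGraph A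

/-- A monotone set-valued operator is paramonotone. -/
def Paramonotone [NormedAddCommGroup H] [InnerProductSpace ℝ H] (A : H → Set H) : Prop :=
  SVMonotone A ∧
    ∀ ⦃x y u v : H⦄, u ∈ A x → v ∈ A y → ⟪x - y, u - v⟫ = 0 → v ∈ A x ∧ u ∈ A y

/-- The inverse of a set-valued operator. -/
def SVInv (A : H → Set H) : H → Set H := fun u => {x | u ∈ A x}

/-- The set of fixed points of a single-valued operator. -/
def FixSet (T : H → H) : Set H := {x | T x = x}

/-- `J` is the resolvent `(Id + γA)⁻¹` of the set-valued operator `A`, i.e.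
`J x` is a point with `x - J x ∈ γ • A (J x)` for every `x`. -/
def IsResolventOf [NormedAddCommGroup H] [InnerProductSpace ℝ H] (A : H → Set H) (γ : ℝ) (J : H → H) : Prop :=
  ∀ x : H, x - J x ∈ γ • A (J x)

theorem resolvent_unique_aux [NormedAddCommGroup H] [InnerProductSpace ℝ H]
    (γ : ℝ) (hγ : 0 < γ) (A : H → Set H) (hA : SVMonotone A)
    (J : H → H) (hJ : IsResolventOf A γ J) (x y w : H) (hy : y ∈ A x) (hw : w = x + γ • y) :
    J w = x := by
  obtain ⟨a, ha, hq⟩ := Set.mem_smul_set.1 (hJ w)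
  have h := hA ha hy
  have e : J w - x = -(γ • (a - y)) := by
    rw [smul_sub, hq, hw]; abel
  rw [e, inner_neg_left, real_inner_smul_left, real_inner_self_eq_norm_sq] at h
  have h0 : ‖a - y‖ ^ 2 ≤ 0 := by
    by_contra hc
    push Not at hc
    have := mul_pos hγ hc
    linarith
  have h1 : ‖a - y‖ = 0 := by
    have := sq_nonneg ‖a - y‖
    exact pow_eq_zero_iff (two_ne_zero) |>.1 (le_antisymm h0 this)
  have h2 : a - y = 0 := norm_eq_zero.1 h1
  rw [h2, smul_zero, neg_zero] at e
  exact sub_eq_zero.1 e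

/-- for maximally monotone paramonotone `A₁, A₂` and `γ > 0`, the fixed
points of the Douglas–Rachford operator `T_γ = Id − J_{γA₁} + J_{γA₂}(2J_{γA₁} − Id)` are
exactly `P + γD`, the sum of the primal solutions and `γ` times the dual solutions. -/
theorem stmt1 [NormedAddCommGroup H] [InnerProductSpace ℝ H] [CompleteSpace H]
    (γ : ℝ) (hγ : 0 < γ) (A₁ A₂ : H → Set H)
    (h₁ : MaxMonotone A₁) (h₂ : MaxMonotone A₂)
    (hp₁ : Paramonotone A₁) (hp₂ : Paramonotone A₂)
    (J₁ J₂ : H → H) (hJ₁ : IsResolventOf A₁ γ J₁) (hJ₂ : IsResolventOf A₂ γ J₂) :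
    FixSet (fun x => x - J₁ x + J₂ ((2 : ℝ) • J₁ x - x)) =
      {x : H | (0 : H) ∈ A₁ x + A₂ x} +
        γ • {y : H | (0 : H) ∈ SVInv A₁ y - SVInv A₂ (-y)} := by
  ext w
  constructor
  · intro hw
    have hw' : w - J₁ w + J₂ ((2 : ℝ) • J₁ w - w) = w := hw
    have hJ : J₂ ((2 : ℝ) • J₁ w - w) = J₁ w := by
      have h3 : J₂ ((2 : ℝ) • J₁ w - w) - J₁ w = 0 := by
        have h4 := sub_eq_zero.2 hw'
        rw [← h4]; abel
      exact sub_eq_zero.1 h3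
    obtain ⟨a, ha, hqa⟩ := Set.mem_smul_set.1 (hJ₁ w)
    obtain ⟨b, hb, hqb⟩ := Set.mem_smul_set.1 (hJ₂ ((2 : ℝ) • J₁ w - w))
    rw [hJ] at hb hqb
    have hab : a + b = 0 := by
      have h5 : γ • (a + b) = 0 := by
        rw [smul_add, hqa, hqb, two_smul]; abel
      exact (smul_eq_zero.1 h5).resolve_left hγ.ne'
    have hb' : b = -a := (neg_eq_of_add_eq_zero_right hab).symm
    refine Set.mem_add.2 ⟨J₁ w, Set.mem_add.2 ⟨a, ha, b, hb, hab⟩, γ • a,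
      Set.smul_mem_smul_set (Set.mem_sub.2 ⟨J₁ w, ha, J₁ w, ?_, sub_self _⟩), ?_⟩
    · show -a ∈ A₂ (J₁ w)
      rwa [← hb']
    · rw [hqa]; abel
  · intro hw
    obtain ⟨x, hx, t, ht, hxt⟩ := Set.mem_add.1 hw
    obtain ⟨y, hy, rfl⟩ := Set.mem_smul_set.1 ht
    obtain ⟨u, hu, v, hv, huv⟩ := Set.mem_add.1 hx
    obtain ⟨z, hz, z', hz', hzz⟩ := Set.mem_sub.1 hy
    obtain rfl : z = z' := sub_eq_zero.1 hzz
    obtain rfl : -u = v := neg_eq_of_add_eq_zero_right huv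
    have hz1 : y ∈ A₁ z := hz
    have hz2 : -y ∈ A₂ z := hz'
    have i1 := hp₁.1 hu hz1
    have i2 := hp₂.1 hv hz2
    have e : -u - -y = -(u - y) := by abel
    have i3 := i2
    rw [e, inner_neg_right] at i3
    have y1 := (hp₁.2 hu hz1 (by linarith)).1
    have y2 := (hp₂.2 hv hz2 (by rw [e, inner_neg_right]; linarith)).1
    have r1 := resolvent_unique_aux γ hγ A₁ h₁.1 J₁ hJ₁ x y w y1 hxt.symm
    have r2 := resolvent_unique_aux γ hγ A₂ h₂.1 J₂ hJ₂ x (-y) ((2 : ℝ) • x - w) y2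
      (by rw [← hxt, two_smul, smul_neg]; abel)
    show w - J₁ w + J₂ ((2 : ℝ) • J₁ w - w) = w
    rw [r1, r2]; abel
end

section
/- Let H be a real Hilbert space, Γ ⊆ (0,∞) a nonempty set, (T_γ)_{γ∈Γ} a family of operators on H with Fix T_γ ≠ ∅ for all γ ∈ Γ, and (Q_{δ←γ})_{δ,γ∈Γ} fixed-point relocators for (T_γ)_{γ∈Γ} satisfying Assumption A. Suppose (γ_n)_{n∈ℕ} ⊆ Γ converges R-linearly to some γ* ∈ Γ. Given c₀ ∈ Fix T_{γ₀}, define c_{n+1} := Q_{γ_{n+1}←γ_n} c_n for all n ∈ ℕ. Then c_n ∈ Fix T_{γ_n} for all n ∈ ℕ, and (c_n)_{n∈ℕ} converges R-linearly to Q_{γ*←γ₀}c₀ ∈ Fix T_{γ*}. -/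
variable {H : Type*}

/-- `(Q δ γ)_{δ,γ ∈ Γ}` is a family of fixed-point relocators for the family of
operators `(T γ)_{γ ∈ Γ}` with Lipschitz constants `(L δ γ)_{δ,γ ∈ Γ}` in `[1,∞)`. -/
def IsRelocators [NormedAddCommGroup H] (Γ : Set ℝ) (T : ℝ → H → H)
    (Q : ℝ → ℝ → H → H) (L : ℝ → ℝ → ℝ) : Prop :=
  (∀ γ ∈ Γ, ∀ δ ∈ Γ, Set.BijOn (Q δ γ) (FixSet (T γ)) (FixSet (T δ))) ∧
  (∀ γ ∈ Γ, ∀ x ∈ FixSet (T γ), ContinuousOn (fun δ : ℝ => Q δ γ x) Γ) ∧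
  (∀ γ ∈ Γ, ∀ δ ∈ Γ, ∀ ε ∈ Γ, ∀ x ∈ FixSet (T γ), Q ε δ (Q δ γ x) = Q ε γ x) ∧
  (∀ γ ∈ Γ, ∀ δ ∈ Γ, 1 ≤ L δ γ ∧ ∀ x y : H, ‖Q δ γ x - Q δ γ y‖ ≤ L δ γ * ‖x - y‖)

/-- Assumption A: on every bounded subset `S` of `⋃_{γ∈Γ} (Fix T_γ × {γ})`, the
relocators satisfy `‖Q δ γ x − Q γ γ x‖ ≤ L |δ − γ|` for some `L > 0`. -/
def AssumptionA [NormedAddCommGroup H] (Γ : Set ℝ) (T : ℝ → H → H)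
    (Q : ℝ → ℝ → H → H) : Prop :=
  ∀ S : Set (H × ℝ), S ⊆ (⋃ γ ∈ Γ, FixSet (T γ) ×ˢ ({γ} : Set ℝ)) →
    Bornology.IsBounded S →
    ∃ L : ℝ, 0 < L ∧ ∀ δ ∈ Γ, ∀ p ∈ S, ‖Q δ p.2 p.1 - Q p.2 p.2 p.1‖ ≤ L * |δ - p.2|

/-- A sequence converges `R`-linearly to a point. -/
def RLinearTo {E : Type*} [NormedAddCommGroup E] (x : ℕ → E) (p : E) : Prop :=
  ∃ C : ℝ, 0 ≤ C ∧ ∃ r ∈ Set.Ioo (0 : ℝ) 1, ∀ n : ℕ, ‖x n - p‖ ≤ C * r ^ n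

/-- if the relocated sequence `c_{n+1} = Q_{γ_{n+1}←γ_n} c_n` starts at a
fixed point of `T_{γ₀}` and the stepsizes converge `R`-linearly to `γ* ∈ Γ`, then
`c_n ∈ Fix T_{γ_n}` for all `n`, and `(c_n)` converges `R`-linearly to
`Q_{γ*←γ₀} c₀ ∈ Fix T_{γ*}`. -/
theorem stmt6 [NormedAddCommGroup H] [InnerProductSpace ℝ H] [CompleteSpace H]
    (Γ : Set ℝ) (hΓne : Γ.Nonempty) (hΓ : Γ ⊆ Set.Ioi (0 : ℝ))
    (T : ℝ → H → H) (Q : ℝ → ℝ → H → H) (L : ℝ → ℝ → ℝ)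
    (hFix : ∀ γ ∈ Γ, (FixSet (T γ)).Nonempty)
    (hQ : IsRelocators Γ T Q L)
    (hA : AssumptionA Γ T Q)
    (γseq : ℕ → ℝ) (hγmem : ∀ n, γseq n ∈ Γ)
    (γs : ℝ) (hγs : γs ∈ Γ) (hγlin : RLinearTo γseq γs)
    (c : ℕ → H) (hc0 : c 0 ∈ FixSet (T (γseq 0)))
    (hcrec : ∀ n : ℕ, c (n + 1) = Q (γseq (n + 1)) (γseq n) (c n)) :
    (∀ n : ℕ, c n ∈ FixSet (T (γseq n))) ∧
    Q γs (γseq 0) (c 0) ∈ FixSet (T γs) ∧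
    RLinearTo c (Q γs (γseq 0) (c 0)) := by
  obtain ⟨hb, -, hs, -⟩ := hQ
  have hfix : ∀ n, c n ∈ FixSet (T (γseq n)) := by
    intro n
    induction n with
    | zero => exact hc0
    | succ k ih =>
      rw [hcrec]
      exact (hb _ (hγmem k) _ (hγmem (k+1))).mapsTo ih
  have hp : Q γs (γseq 0) (c 0) ∈ FixSet (T γs) := (hb _ (hγmem 0) _ hγs).mapsTo hc0
  have hc : ∀ n, c n = Q (γseq n) (γseq 0) (c 0) := by
    intro n
    induction n with
    | zero =>
      have h0 := hγmem 0
      have hB := hb _ h0 _ h0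
      exact (hB.injOn (hB.mapsTo hc0) hc0 (hs _ h0 _ h0 _ h0 _ hc0)).symm
    | succ k ih =>
      rw [hcrec, ih]
      exact hs _ (hγmem 0) _ (hγmem k) _ (hγmem (k+1)) _ hc0
  refine ⟨hfix, hp, ?_⟩
  obtain ⟨K, hK, hKA⟩ := hA {(Q γs (γseq 0) (c 0), γs)} (by
    rintro _ rfl
    simp only [Set.mem_iUnion]
    exact ⟨γs, hγs, hp, rfl⟩) Bornology.isBounded_singleton
  obtain ⟨C, hC, r, hr, h⟩ := hγlin
  refine ⟨K * C, by positivity, r, hr, fun n => ?_⟩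
  have h1 := hKA _ (hγmem n) _ rfl
  simp only at h1
  rw [hs _ (hγmem 0) _ hγs _ (hγmem n) _ hc0, hs _ (hγmem 0) _ hγs _ hγs _ hc0, ← hc n] at h1
  have h2 := h n
  rw [Real.norm_eq_abs] at h2
  calc _ ≤ _ := h1
    _ ≤ K * (C * r ^ n) := by gcongr
    _ = _ := by ring
end

section
/- Let H be a real Hilbert space, Γ ⊆ (0,∞) a nonempty set, α ∈ (0,1), (T_γ)_{γ∈Γ} a family of α-averaged nonexpansive operators on H with Fix T_γ ≠ ∅ for all γ ∈ Γ, and (Q_{δ←γ})_{δ,γ∈Γ} fixed-point relocators for (T_γ)_{γ∈Γ} with Lipschitz constants (L_{δ←γ})_{δ,γ∈Γ} in [1,∞). Suppose: Assumption A holds; the map (x,γ) ↦ T_γx is continuous on H × Γ; (T_γ)_{γ∈Γ} is uniformly boundedly linearly regular; (γ_n)_{n∈ℕ} ⊆ Γ converges R-linearly to some γ* ∈ Γ; and ∑_{n∈ℕ}(L_{γ_{n+1}←γ_n} − 1) < +∞. Given x₀ ∈ H, define x_{n+1} := Q_{γ_{n+1}←γ_n}(T_{γ_n}x_n) for all n ∈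 ℕ. Then the sequence (dist(x_n, Fix T_{γ_n}))_{n∈ℕ} converges R-linearly to zero, i.e., there exist C ≥ 0 and r ∈ (0,1) with dist(x_n, Fix T_{γ_n}) ≤ C rⁿ for all n ∈ ℕ. -/
variable {H : Type*}

/-- `T` is an `α`-averaged nonexpansive operator. -/
def AveragedNE [NormedAddCommGroup H] [InnerProductSpace ℝ H] (α : ℝ) (T : H → H) : Prop :=
  ∀ x y : H, ‖T x - T y‖ ^ 2 + ((1 - α) / α) * ‖(x - T x) - (y - T y)‖ ^ 2 ≤ ‖x - y‖ ^ 2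

/-- The family `(T γ)_{γ ∈ Γ}` is uniformly boundedly linearly regular. -/
def UnifBddLinReg [NormedAddCommGroup H] (Γ : Set ℝ) (T : ℝ → H → H) : Prop :=
  ∀ S : Set H, S.Nonempty → Bornology.IsBounded S →
    ∃ κ : ℝ, 0 < κ ∧ ∀ x ∈ S, ∀ γ ∈ Γ,
      Metric.infDist x (FixSet (T γ)) ≤ κ * ‖x - T γ x‖

theorem prod_le_aux (l : ℕ → ℝ) (h1 : ∀ n, 1 ≤ l n) (hs : Summable fun n => l n - 1)
    (d : ℕ → ℝ) (hd : ∀ n, 0 ≤ d n) (ρ : ℝ) (hρ : 0 ≤ ρ)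
    (h : ∀ n, d (n + 1) ≤ l n * (ρ * d n)) :
    ∀ n, d n ≤ Real.exp (∑' n, (l n - 1)) * d 0 * ρ ^ n := by
  have key : ∀ n, d n ≤ Real.exp (∑ k ∈ Finset.range n, (l k - 1)) * d 0 * ρ ^ n := by
    intro n
    induction n with
    | zero => simp
    | succ n ih =>
      have e1 : l n ≤ Real.exp (l n - 1) := by
        have := Real.add_one_le_exp (l n - 1)
        linarith
      calc d (n + 1) ≤ l n * (ρ * d n) := h n
        _ ≤ Real.exp (l n - 1) *
            (ρ * (Real.exp (∑ k ∈ Finset.range n, (l k - 1)) * d 0 * ρ ^ n)) := by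
          have := hd n
          have := h1 n
          gcongr
        _ = _ := by
          rw [Finset.sum_range_succ, Real.exp_add]
          ring
  intro n
  refine (key n).trans ?_
  have := hd 0
  have : ∑ k ∈ Finset.range n, (l k - 1) ≤ ∑' n, (l n - 1) :=
    hs.sum_le_tsum _ (fun i _ => by linarith [h1 i])
  gcongr

theorem le_of_sq_le_sq_aux {a b : ℝ} (h : a ^ 2 ≤ b ^ 2) (hb : 0 ≤ b) : a ≤ b :=
  le_of_abs_le (abs_le_of_sq_le_sq h hb)

/-- under bounded linear regularity, the distances of the relocated
fixed-point iterates to the fixed-point sets converge `R`-linearly to zero. -/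
theorem stmt7 [NormedAddCommGroup H] [InnerProductSpace ℝ H] [CompleteSpace H]
    (Γ : Set ℝ) (hΓne : Γ.Nonempty) (hΓ : Γ ⊆ Set.Ioi (0 : ℝ))
    (α : ℝ) (hα : α ∈ Set.Ioo (0 : ℝ) 1)
    (T : ℝ → H → H) (hTav : ∀ γ ∈ Γ, AveragedNE α (T γ))
    (hFix : ∀ γ ∈ Γ, (FixSet (T γ)).Nonempty)
    (Q : ℝ → ℝ → H → H) (L : ℝ → ℝ → ℝ)
    (hQ : IsRelocators Γ T Q L)
    (hA : AssumptionA Γ T Q)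
    (hcont : ContinuousOn (fun p : H × ℝ => T p.2 p.1) (Set.univ ×ˢ Γ))
    (hreg : UnifBddLinReg Γ T)
    (γseq : ℕ → ℝ) (hγmem : ∀ n, γseq n ∈ Γ)
    (γs : ℝ) (hγs : γs ∈ Γ) (hγlin : RLinearTo γseq γs)
    (hsum : Summable fun n => L (γseq (n + 1)) (γseq n) - 1)
    (x : ℕ → H)
    (hrec : ∀ n : ℕ, x (n + 1) = Q (γseq (n + 1)) (γseq n) (T (γseq n) (x n))) :
    ∃ C : ℝ, 0 ≤ C ∧ ∃ r ∈ Set.Ioo (0 : ℝ) 1, ∀ n : ℕ,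
      Metric.infDist (x n) (FixSet (T (γseq n))) ≤ C * r ^ n := by
  obtain ⟨hbij, hQc, hcomp, hlip⟩ := hQ
  obtain ⟨hα0, hα1⟩ := hα
  have hc : 0 < (1 - α) / α := div_pos (by linarith) hα0
  set c := (1 - α) / α with hcdef
  have hl1 : ∀ n, 1 ≤ L (γseq (n + 1)) (γseq n) := fun n =>
    (hlip _ (hγmem n) _ (hγmem (n + 1))).1
  -- averagedness at fixed points
  have hav : ∀ γ ∈ Γ, ∀ u, ∀ y ∈ FixSet (T γ),
      ‖T γ u - y‖ ^ 2 + c * ‖u - T γ u‖ ^ 2 ≤ ‖u - y‖ ^ 2 := by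
    intro γ hγ u y hy
    have h := hTav γ hγ u y
    have hy' : T γ y = y := hy
    rw [hy'] at h
    simpa using h
  have hstep : ∀ n, ∀ y ∈ FixSet (T (γseq n)),
      ‖x (n + 1) - Q (γseq (n + 1)) (γseq n) y‖ ≤
        L (γseq (n + 1)) (γseq n) * ‖T (γseq n) (x n) - y‖ := by
    intro n y _
    rw [hrec n]
    exact (hlip _ (hγmem n) _ (hγmem (n + 1))).2 _ _
  -- boundedness
  have hγt : Filter.Tendsto γseq Filter.atTop (nhds γs) := by
    obtain ⟨C, hC, r, hr, h⟩ := hγlin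
    rw [tendsto_iff_norm_sub_tendsto_zero]
    refine squeeze_zero (fun n => norm_nonneg _) h ?_
    simpa using (tendsto_pow_atTop_nhds_zero_of_lt_one hr.1.le hr.2).const_mul C
  obtain ⟨zs, hzs⟩ := hFix γs hγs
  have hzt : Filter.Tendsto (fun n => Q (γseq n) γs zs) Filter.atTop
      (nhds (Q γs γs zs)) := by
    have h := hQc γs hγs zs hzs γs hγs
    exact h.tendsto.comp (tendsto_nhdsWithin_iff.2 ⟨hγt, Filter.Eventually.of_forall hγmem⟩)
  obtain ⟨B, hB⟩ := (Metric.isBounded_range_of_tendsto _ hzt).exists_norm_le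
  have hxz := prod_le_aux (fun n => L (γseq (n + 1)) (γseq n)) hl1 hsum
    (fun n => ‖x n - Q (γseq n) γs zs‖) (fun n => norm_nonneg _) 1 zero_le_one (by
      intro n
      have hz : Q (γseq n) γs zs ∈ FixSet (T (γseq n)) := (hbij γs hγs _ (hγmem n)).mapsTo hzs
      have h1 := hstep n _ hz
      rw [hcomp γs hγs _ (hγmem n) _ (hγmem (n + 1)) zs hzs] at h1
      refine h1.trans ?_
      have h2 := hav _ (hγmem n) (x n) _ hz
      have h3 : ‖T (γseq n) (x n) - Q (γseq n) γs zs‖ ≤ ‖x n - Q (γseq n) γs zs‖ := by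
        refine le_of_sq_le_sq_aux ?_ (norm_nonneg _)
        have : 0 ≤ c * ‖x n - T (γseq n) (x n)‖ ^ 2 := by positivity
        linarith
      have := hl1 n
      simp only [one_mul]
      gcongr)
  have hbdd : Bornology.IsBounded (Set.range x) := by
    refine isBounded_iff_forall_norm_le.2
      ⟨Real.exp (∑' n, (L (γseq (n + 1)) (γseq n) - 1)) * ‖x 0 - Q (γseq 0) γs zs‖ * 1 + B, ?_⟩
    · rintro _ ⟨n, rfl⟩
      have h1 := hxz n
      have h2 := hB _ (Set.mem_range_self n)
      have h3 : ‖x n‖ ≤ ‖x n - Q (γseq n) γs zs‖ + ‖Q (γseq n) γs zs‖ := by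
        simpa using norm_add_le (x n - Q (γseq n) γs zs) (Q (γseq n) γs zs)
      simp only [one_pow] at h1
      exact h3.trans (add_le_add h1 h2)
  obtain ⟨κ, hκ, hreg'⟩ := hreg _ (Set.range_nonempty x) hbdd
  have he : 0 < c / κ ^ 2 := by positivity
  set ρ := Real.sqrt (max (1 - c / κ ^ 2) (1 / 4)) with hρdef
  have hm0 : 0 < max (1 - c / κ ^ 2) (1 / 4 : ℝ) := lt_max_of_lt_right (by norm_num)
  have hρ0 : 0 < ρ := Real.sqrt_pos.2 hm0
  have hρ1 : ρ < 1 := by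
    rw [hρdef, Real.sqrt_lt' one_pos]
    simp only [one_pow, max_lt_iff]
    constructor
    · linarith
    · norm_num
  have hρsq : ρ ^ 2 = max (1 - c / κ ^ 2) (1 / 4) := Real.sq_sqrt hm0.le
  have hfin := prod_le_aux (fun n => L (γseq (n + 1)) (γseq n)) hl1 hsum
    (fun n => Metric.infDist (x n) (FixSet (T (γseq n)))) (fun n => Metric.infDist_nonneg)
    ρ hρ0.le (by
      intro n
      set l := L (γseq (n + 1)) (γseq n)
      set D := Metric.infDist (x (n + 1)) (FixSet (T (γseq (n + 1))))
      set d := Metric.infDist (x n) (FixSet (T (γseq n))) with hd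
      have hl : 1 ≤ l := hl1 n
      have hl0 : 0 < l := by linarith
      have hD0 : 0 ≤ D := Metric.infDist_nonneg
      have hd0 : 0 ≤ d := Metric.infDist_nonneg
      have hr : d ≤ κ * ‖x n - T (γseq n) (x n)‖ :=
        hreg' _ (Set.mem_range_self n) _ (hγmem n)
      have hr2 : c / κ ^ 2 * d ^ 2 ≤ c * ‖x n - T (γseq n) (x n)‖ ^ 2 := by
        calc c / κ ^ 2 * d ^ 2 ≤ c / κ ^ 2 * (κ * ‖x n - T (γseq n) (x n)‖) ^ 2 := by gcongr
          _ = _ := by field_simp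
      have hs : Real.sqrt ((D / l) ^ 2 + c / κ ^ 2 * d ^ 2) ≤ d := by
        rw [hd, Metric.le_infDist (hFix _ (hγmem n))]
        intro y hy
        rw [dist_eq_norm]
        refine Real.sqrt_le_iff.2 ⟨norm_nonneg _, ?_⟩
        have h1 := hav _ (hγmem n) (x n) y hy
        have h2 : D ≤ l * ‖T (γseq n) (x n) - y‖ := by
          refine le_trans ?_ (hstep n y hy)
          rw [← dist_eq_norm]
          exact Metric.infDist_le_dist_of_mem
            ((hbij _ (hγmem n) _ (hγmem (n + 1))).mapsTo hy)
        have h3 : D / l ≤ ‖T (γseq n) (x n) - y‖ := by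
          rw [div_le_iff₀ hl0]
          linarith
        have h4 : (D / l) ^ 2 ≤ ‖T (γseq n) (x n) - y‖ ^ 2 := by gcongr
        linarith
      have hs2 := (Real.sqrt_le_iff.1 hs).2
      have h5 : D / l ≤ ρ * d := by
        refine le_of_sq_le_sq_aux ?_ (by positivity)
        rw [mul_pow, hρsq]
        have : (1 - c / κ ^ 2) * d ^ 2 ≤ max (1 - c / κ ^ 2) (1 / 4) * d ^ 2 := by
          gcongr
          exact le_max_left _ _
        linarith
      rw [div_le_iff₀ hl0] at h5
      linarith)
  exact ⟨_, mul_nonneg (Real.exp_pos _).le Metric.infDist_nonneg, ρ, ⟨hρ0, hρ1⟩, hfin⟩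
end

section
/- Let H be a real Hilbert space, Γ ⊆ (0,∞) a nonempty set, α ∈ (0,1), (T_γ)_{γ∈Γ} a family of α-averaged nonexpansive operators on H with Fix T_γ ≠ ∅ for all γ ∈ Γ, and (Q_{δ←γ})_{δ,γ∈Γ} fixed-point relocators for (T_γ)_{γ∈Γ} with Lipschitz constants (L_{δ←γ})_{δ,γ∈Γ} in [1,∞). Suppose: Assumption A holds; the map (x,γ) ↦ T_γx is continuous on H × Γ; (T_γ)_{γ∈Γ} is uniformly boundedly linearly regular; (γ_n)_{n∈ℕ} ⊆ Γ converges R-linearly to some γ* ∈ Γ; and ∑_{n∈ℕ}(L_{γ_{n+1}←γ_n} − 1) < +∞. Given x₀ ∈ H, define x_{n+1} := Q_{γ_{n+1}←γ_n}(T_{γ_n}x_n) for all n ∈ ℕ. Then there exists x ∈ Fix T_{γ*} such that both (x_n)_{n∈ℕ} and (T_{γ_n}x_n)_{n∈ℕ} converge R-linearly to x. -/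
variable {H : Type*}

theorem aux_prod (u ell : ℕ → ℝ) (ρ : ℝ) (hρ : 0 ≤ ρ) (hu : ∀ n, 0 ≤ u n)
    (h1 : ∀ n, 1 ≤ ell n) (hs : Summable fun n => ell n - 1)
    (h : ∀ n, u (n + 1) ≤ ell n * (ρ * u n)) (n : ℕ) :
    u n ≤ Real.exp (∑' i, (ell i - 1)) * u 0 * ρ ^ n := by
  have key : ∀ n, u n ≤ Real.exp (∑ i ∈ Finset.range n, (ell i - 1)) * u 0 * ρ ^ n := by
    intro n
    induction n with
    | zero => simp
    | succ k ih =>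
      have e1 : ell k ≤ Real.exp (ell k - 1) := by
        have := Real.add_one_le_exp (ell k - 1)
        linarith
      have h0 := hu k
      have h00 := hu 0
      rw [Finset.sum_range_succ, Real.exp_add]
      calc u (k + 1) ≤ ell k * (ρ * u k) := h k
        _ ≤ Real.exp (ell k - 1) *
            (ρ * (Real.exp (∑ i ∈ Finset.range k, (ell i - 1)) * u 0 * ρ ^ k)) := by
          gcongr
        _ = _ := by ring
  refine (key n).trans ?_
  have h00 := hu 0
  gcongr
  exact hs.sum_le_tsum _ (fun i _ => by linarith [h1 i])

theorem aux_contr [NormedAddCommGroup H] [InnerProductSpace ℝ H] {α : ℝ} {T : H → H}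
    (hT : AveragedNE α T) {x y : H} (hy : y ∈ FixSet T) :
    ‖T x - y‖ ^ 2 + ((1 - α) / α) * ‖x - T x‖ ^ 2 ≤ ‖x - y‖ ^ 2 := by
  have h := hT x y
  have hy' : T y = y := hy
  simpa [hy'] using h

/-- under bounded linear regularity, the relocated fixed-point iterates
`(x_n)` and `(T_{γ_n} x_n)` converge `R`-linearly to a common fixed point of `T_{γ*}`. -/
theorem stmt8 [NormedAddCommGroup H] [InnerProductSpace ℝ H] [CompleteSpace H]
    (Γ : Set ℝ) (hΓne : Γ.Nonempty) (hΓ : Γ ⊆ Set.Ioi (0 : ℝ))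
    (α : ℝ) (hα : α ∈ Set.Ioo (0 : ℝ) 1)
    (T : ℝ → H → H) (hTav : ∀ γ ∈ Γ, AveragedNE α (T γ))
    (hFix : ∀ γ ∈ Γ, (FixSet (T γ)).Nonempty)
    (Q : ℝ → ℝ → H → H) (L : ℝ → ℝ → ℝ)
    (hQ : IsRelocators Γ T Q L)
    (hA : AssumptionA Γ T Q)
    (hcont : ContinuousOn (fun p : H × ℝ => T p.2 p.1) (Set.univ ×ˢ Γ))
    (hreg : UnifBddLinReg Γ T)
    (γseq : ℕ → ℝ) (hγmem : ∀ n, γseq n ∈ Γ)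
    (γs : ℝ) (hγs : γs ∈ Γ) (hγlin : RLinearTo γseq γs)
    (hsum : Summable fun n => L (γseq (n + 1)) (γseq n) - 1)
    (x : ℕ → H)
    (hrec : ∀ n : ℕ, x (n + 1) = Q (γseq (n + 1)) (γseq n) (T (γseq n) (x n))) :
    ∃ xs : H, xs ∈ FixSet (T γs) ∧ RLinearTo x xs ∧
      RLinearTo (fun n => T (γseq n) (x n)) xs := by
  obtain ⟨hα0, hα1⟩ := hα
  obtain ⟨hbij, hQc, hQcomp, hQL⟩ := hQ
  set c : ℝ := (1 - α) / α with hc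
  have hcpos : 0 < c := div_pos (by linarith) hα0
  have hav : ∀ n, ∀ z, ∀ y ∈ FixSet (T (γseq n)),
      ‖T (γseq n) z - y‖ ^ 2 + c * ‖z - T (γseq n) z‖ ^ 2 ≤ ‖z - y‖ ^ 2 :=
    fun n z y hy => aux_contr (hTav _ (hγmem n)) hy
  have hne : ∀ n, ∀ z, ∀ y ∈ FixSet (T (γseq n)), ‖T (γseq n) z - y‖ ≤ ‖z - y‖ := by
    intro n z y hy
    have := hav n z y hy
    have h2 : 0 ≤ c * ‖z - T (γseq n) z‖ ^ 2 := by positivity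
    exact le_of_sq_le_sq_aux (by linarith) (norm_nonneg _)
  set ell : ℕ → ℝ := fun n => L (γseq (n + 1)) (γseq n) with hell
  have hell1 : ∀ n, 1 ≤ ell n := fun n => (hQL _ (hγmem n) _ (hγmem (n + 1))).1
  have hQn : ∀ n (z y : H), ‖Q (γseq (n + 1)) (γseq n) z - Q (γseq (n + 1)) (γseq n) y‖
      ≤ ell n * ‖z - y‖ := fun n => (hQL _ (hγmem n) _ (hγmem (n + 1))).2
  obtain ⟨Cγ, hCγ, r, ⟨hr0, hr1⟩, hγr⟩ := hγlin
  have hγt : Filter.Tendsto γseq Filter.atTop (nhds γs) := by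
    rw [tendsto_iff_norm_sub_tendsto_zero]
    refine squeeze_zero (fun n => norm_nonneg _) hγr ?_
    simpa using (tendsto_pow_atTop_nhds_zero_of_lt_one hr0.le hr1).const_mul Cγ
  have hγtw : Filter.Tendsto γseq Filter.atTop (nhdsWithin γs Γ) :=
    tendsto_nhdsWithin_iff.2 ⟨hγt, Filter.Eventually.of_forall hγmem⟩
  -- reference fixed points
  obtain ⟨p0, hp0⟩ := hFix _ (hγmem 0)
  set p : ℕ → H := fun n => Q (γseq n) (γseq 0) p0 with hp
  have hpmem : ∀ n, p n ∈ FixSet (T (γseq n)) :=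
    fun n => (hbij _ (hγmem 0) _ (hγmem n)).mapsTo hp0
  have hpstep : ∀ n, Q (γseq (n + 1)) (γseq n) (p n) = p (n + 1) :=
    fun n => hQcomp _ (hγmem 0) _ (hγmem n) _ (hγmem (n + 1)) _ hp0
  have hpt : Filter.Tendsto p Filter.atTop (nhds (Q γs (γseq 0) p0)) :=
    ((hQc _ (hγmem 0) p0 hp0) γs hγs).tendsto.comp hγtw
  obtain ⟨B, hB⟩ := hpt.norm.bddAbove_range
  have hB : ∀ n, ‖p n‖ ≤ B := fun n => hB ⟨n, rfl⟩
  set M : ℝ := Real.exp (∑' i, (ell i - 1)) with hM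
  have hM0 : 0 < M := Real.exp_pos _
  have hellM : ∀ n, ell n ≤ M := by
    intro n
    have e1 := Real.add_one_le_exp (ell n - 1)
    have e2 : ell n - 1 ≤ ∑' i, (ell i - 1) :=
      hsum.le_tsum n (fun i _ => by linarith [hell1 i])
    have := Real.exp_le_exp.2 e2
    linarith
  have hxp : ∀ n, ‖x n - p n‖ ≤ M * ‖x 0 - p 0‖ := by
    intro n
    have := aux_prod (fun n => ‖x n - p n‖) ell 1 zero_le_one (fun n => norm_nonneg _)
      hell1 hsum (fun n => by
        have h1 := hQn n (T (γseq n) (x n)) (p n)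
        rw [← hrec, hpstep] at h1
        have h2 := hne n (x n) (p n) (hpmem n)
        have h3 := hell1 n
        refine h1.trans ?_
        rw [one_mul]
        gcongr) n
    simpa using this
  set R : ℝ := M * ‖x 0 - p 0‖ with hR
  have hxB : ∀ n, ‖x n‖ ≤ R + B := by
    intro n
    have h1 := norm_add_le (x n - p n) (p n)
    rw [sub_add_cancel] at h1
    linarith [hxp n, hB n]
  obtain ⟨κ, hκ, hκr⟩ := hreg (Set.range x) (Set.range_nonempty x)
    (isBounded_iff_forall_norm_le.2 ⟨R + B, by rintro _ ⟨n, rfl⟩; exact hxB n⟩)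
  set d : ℕ → ℝ := fun n => Metric.infDist (x n) (FixSet (T (γseq n))) with hd
  have hd0 : ∀ n, 0 ≤ d n := fun n => Metric.infDist_nonneg
  have hdκ : ∀ n, d n ≤ κ * ‖x n - T (γseq n) (x n)‖ :=
    fun n => hκr _ ⟨n, rfl⟩ _ (hγmem n)
  set ρ : ℝ := Real.sqrt (κ ^ 2 / (κ ^ 2 + c)) with hρ
  have hq0 : 0 < κ ^ 2 / (κ ^ 2 + c) := by positivity
  have hρ0 : 0 < ρ := Real.sqrt_pos.2 hq0
  have hρsq : ρ ^ 2 = κ ^ 2 / (κ ^ 2 + c) := Real.sq_sqrt hq0.le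
  have hρ1 : ρ < 1 := by
    have : ρ ^ 2 < 1 := by
      rw [hρsq, div_lt_one (by positivity)]
      linarith
    nlinarith
  have hdstep : ∀ n, d (n + 1) ≤ ell n * (ρ * d n) := by
    intro n
    set D := Metric.infDist (T (γseq n) (x n)) (FixSet (T (γseq n))) with hD
    set e := ‖x n - T (γseq n) (x n)‖ with he
    have hD0 : 0 ≤ D := Metric.infDist_nonneg
    have hlpos : 0 < ell n := by linarith [hell1 n]
    have h1 : Real.sqrt (D ^ 2 + c * e ^ 2) ≤ d n := by
      refine (Metric.le_infDist (hFix _ (hγmem n))).2 ?_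
      intro y hy
      have a1 := hav n (x n) y hy
      have a2 : D ≤ ‖T (γseq n) (x n) - y‖ := by
        rw [← dist_eq_norm]; exact Metric.infDist_le_dist_of_mem hy
      rw [dist_eq_norm]
      refine Real.sqrt_le_iff.2 ⟨norm_nonneg _, ?_⟩
      have a3 : D ^ 2 ≤ ‖T (γseq n) (x n) - y‖ ^ 2 := by gcongr
      linarith
    have h2 : D ^ 2 + c * e ^ 2 ≤ d n ^ 2 := (Real.sqrt_le_iff.1 h1).2
    have h3 : (d n) ^ 2 ≤ κ ^ 2 * e ^ 2 := by
      rw [← mul_pow]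
      have := hdκ n
      have := hd0 n
      gcongr
    have h4 : D ^ 2 ≤ (ρ * d n) ^ 2 := by
      rw [mul_pow, hρsq, div_mul_eq_mul_div, le_div_iff₀ (by positivity)]
      have b1 : c * D ^ 2 ≤ c * d n ^ 2 := by
        have : 0 ≤ c * e ^ 2 := by positivity
        gcongr ?_ * ?_
        linarith
      have b2 : κ ^ 2 * (D ^ 2 + c * e ^ 2) ≤ κ ^ 2 * d n ^ 2 := by gcongr
      have b3 : c * d n ^ 2 ≤ c * (κ ^ 2 * e ^ 2) := by gcongr
      linarith
    have h5 : D ≤ ρ * d n := le_of_sq_le_sq_aux h4 (mul_nonneg hρ0.le (hd0 n))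
    have h6 : d (n + 1) / ell n ≤ D := by
      refine (Metric.le_infDist (hFix _ (hγmem n))).2 ?_
      intro y hy
      rw [div_le_iff₀ hlpos, dist_eq_norm, mul_comm]
      refine le_trans ?_ (hQn n _ _)
      rw [← hrec, ← dist_eq_norm]
      exact Metric.infDist_le_dist_of_mem ((hbij _ (hγmem n) _ (hγmem (n + 1))).mapsTo hy)
    rw [div_le_iff₀ hlpos] at h6
    calc d (n + 1) ≤ D * ell n := h6
      _ ≤ (ρ * d n) * ell n := by gcongr
      _ = _ := by ring
  have hdn : ∀ n, d n ≤ M * d 0 * ρ ^ n := aux_prod d ell ρ hρ0.le hd0 hell1 hsum hdstep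
  set A : ℝ := M * d 0 + 1 with hAdef
  have hA0 : 0 < A := by
    have := hd0 0
    positivity
  -- near-projections
  have hy : ∀ n, ∃ y ∈ FixSet (T (γseq n)), ‖x n - y‖ ≤ A * ρ ^ n := by
    intro n
    have hlt : d n < A * ρ ^ n := by
      have : 0 < ρ ^ n := by positivity
      have := hdn n
      rw [hAdef]
      linarith
    obtain ⟨y, hy, hlt⟩ := (Metric.infDist_lt_iff (hFix _ (hγmem n))).1 hlt
    exact ⟨y, hy, by rw [← dist_eq_norm]; exact hlt.le⟩
  choose y hymem hyd using hy
  have hTy : ∀ n, ‖T (γseq n) (x n) - y n‖ ≤ A * ρ ^ n :=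
    fun n => (hne n _ _ (hymem n)).trans (hyd n)
  have hTx : ∀ n, ‖T (γseq n) (x n) - x n‖ ≤ 2 * A * ρ ^ n := by
    intro n
    have := norm_sub_le (T (γseq n) (x n) - y n) (x n - y n)
    rw [sub_sub_sub_cancel_right] at this
    linarith [hTy n, hyd n]
  have hyB : ∀ n, ‖y n‖ ≤ R + B + A := by
    intro n
    have h1 := norm_sub_le (x n) (x n - y n)
    rw [sub_sub_cancel] at h1
    have h2 : A * ρ ^ n ≤ A * 1 := by
      gcongr
      exact pow_le_one₀ hρ0.le hρ1.le
    linarith [hxB n, hyd n]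
  have hQid : ∀ n, Q (γseq n) (γseq n) (y n) = y n := by
    intro n
    have hb := hbij _ (hγmem n) _ (hγmem n)
    exact hb.injOn (hb.mapsTo (hymem n)) (hymem n)
      (hQcomp _ (hγmem n) _ (hγmem n) _ (hγmem n) _ (hymem n))
  obtain ⟨G, hG⟩ := hγt.norm.bddAbove_range
  have hG : ∀ n, ‖γseq n‖ ≤ G := fun n => hG ⟨n, rfl⟩
  obtain ⟨K, hK, hKA⟩ := hA (Set.range fun n => (y n, γseq n))
    (by
      rintro _ ⟨n, rfl⟩
      simp only [Set.mem_iUnion]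
      exact ⟨γseq n, hγmem n, hymem n, rfl⟩)
    (isBounded_iff_forall_norm_le.2 ⟨max (R + B + A) G, by
      rintro _ ⟨n, rfl⟩
      exact max_le_max (hyB n) (hG n)⟩)
  have hQy : ∀ n, ‖Q (γseq (n + 1)) (γseq n) (y n) - y n‖ ≤ K * (2 * Cγ * r ^ n) := by
    intro n
    have h1 := hKA _ (hγmem (n + 1)) _ ⟨n, rfl⟩
    simp only [hQid] at h1
    refine h1.trans ?_
    gcongr
    have h2 := norm_sub_le (γseq (n + 1) - γs) (γseq n - γs)
    rw [sub_sub_sub_cancel_right, Real.norm_eq_abs] at h2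
    have h3 := hγr n
    have h4 := hγr (n + 1)
    have h5 : Cγ * r ^ (n + 1) ≤ Cγ * r ^ n := by
      gcongr ?_ * ?_
      exact pow_le_pow_of_le_one hr0.le hr1.le (Nat.le_succ n)
    linarith
  set s : ℝ := max ρ r with hs
  have hs0 : 0 < s := lt_max_of_lt_left hρ0
  have hs1 : s < 1 := max_lt hρ1 hr1
  have hρs : ∀ n, ρ ^ n ≤ s ^ n := fun n => pow_le_pow_left₀ hρ0.le (le_max_left _ _) n
  have hrs : ∀ n, r ^ n ≤ s ^ n := fun n => pow_le_pow_left₀ hr0.le (le_max_right _ _) n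
  set E : ℝ := M * A + K * (2 * Cγ) + A with hE
  have hE0 : 0 ≤ E := by positivity
  have hstep : ∀ n, dist (x n) (x (n + 1)) ≤ E * s ^ n := by
    intro n
    have h1 := hQn n (T (γseq n) (x n)) (y n)
    rw [← hrec] at h1
    have h2 : ell n * ‖T (γseq n) (x n) - y n‖ ≤ M * (A * ρ ^ n) := by
      have := hellM n
      have := hTy n
      gcongr
    have h3 := dist_triangle4 (x n) (y n) (Q (γseq (n + 1)) (γseq n) (y n)) (x (n + 1))
    rw [dist_eq_norm (x n) (y n), dist_comm (y n), dist_eq_norm _ (y n),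
      dist_comm (Q (γseq (n + 1)) (γseq n) (y n)) (x (n + 1)),
      dist_eq_norm (x (n + 1)) (Q (γseq (n + 1)) (γseq n) (y n))] at h3
    have h4 : M * (A * ρ ^ n) ≤ M * (A * s ^ n) := by
      have := hρs n
      gcongr
    have h5 : K * (2 * Cγ * r ^ n) ≤ K * (2 * Cγ * s ^ n) := by
      have := hrs n
      gcongr
    have h6 : A * ρ ^ n ≤ A * s ^ n := by
      have := hρs n
      gcongr
    have h7 := hQy n
    have h8 := hyd n
    have h9 : E * s ^ n = M * (A * s ^ n) + K * (2 * Cγ * s ^ n) + A * s ^ n := by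
      rw [hE]; ring
    linarith
  obtain ⟨xs, hxs⟩ := cauchySeq_tendsto_of_complete (cauchySeq_of_le_geometric s E hs1 hstep)
  have hrate : ∀ n, ‖x n - xs‖ ≤ E / (1 - s) * s ^ n := by
    intro n
    have := dist_le_of_le_geometric_of_tendsto s E hs1 hstep hxs n
    rw [dist_eq_norm] at this
    rw [div_mul_eq_mul_div]
    exact this
  have hF0 : 0 ≤ E / (1 - s) := div_nonneg hE0 (by linarith)
  have hTrate : ∀ n, ‖T (γseq n) (x n) - xs‖ ≤ (2 * A + E / (1 - s)) * s ^ n := by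
    intro n
    have h1 := norm_add_le (T (γseq n) (x n) - x n) (x n - xs)
    rw [sub_add_sub_cancel] at h1
    have h6 : 2 * A * ρ ^ n ≤ 2 * A * s ^ n := by
      have := hρs n
      gcongr
    linarith [hTx n, hrate n]
  refine ⟨xs, ?_, ⟨_, hF0, s, ⟨hs0, hs1⟩, hrate⟩, ⟨_, by positivity, s, ⟨hs0, hs1⟩, hTrate⟩⟩
  have ht1 : Filter.Tendsto (fun n => T (γseq n) (x n)) Filter.atTop (nhds xs) := by
    rw [tendsto_iff_norm_sub_tendsto_zero]
    refine squeeze_zero (fun n => norm_nonneg _) hTrate ?_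
    simpa using (tendsto_pow_atTop_nhds_zero_of_lt_one hs0.le hs1).const_mul
      (2 * A + E / (1 - s))
  have ht2 : Filter.Tendsto (fun n => T (γseq n) (x n)) Filter.atTop (nhds (T γs xs)) := by
    have hc1 := (hcont (xs, γs) ⟨Set.mem_univ _, hγs⟩).tendsto
    have hc2 : Filter.Tendsto (fun n => (x n, γseq n)) Filter.atTop
        (nhdsWithin (xs, γs) (Set.univ ×ˢ Γ)) :=
      tendsto_nhdsWithin_iff.2 ⟨hxs.prodMk_nhds hγt,
        Filter.Eventually.of_forall fun n => ⟨Set.mem_univ _, hγmem n⟩⟩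
    exact hc1.comp hc2
  exact tendsto_nhds_unique ht2 ht1
end

section
/- Let H be a real Hilbert space, Γ ⊆ (0,∞) a nonempty set, β ∈ [0,1), (T_γ)_{γ∈Γ} a family of β-contractions on H with Fix T_γ ≠ ∅ for all γ ∈ Γ, and (Q_{δ←γ})_{δ,γ∈Γ} fixed-point relocators for (T_γ)_{γ∈Γ} with Lipschitz constants (L_{δ←γ})_{δ,γ∈Γ} in [1,∞). Suppose: Assumption A holds; the map (x,γ) ↦ T_γx is continuous on H × Γ; (γ_n)_{n∈ℕ} ⊆ Γ converges R-linearly to some γ* ∈ Γ; and ∑_{n∈ℕ}(L_{γ_{n+1}←γ_n} − 1) < +∞. Given x₀ ∈ H, define x_{n+1} := Q_{γ_{n+1}←γ_n}(T_{γ_n}x_n) for all n ∈ ℕ. Then: (i) (dist(x_n, Fix T_{γ_n}))_{n∈ℕ} converges R-linearly to zero; and (ii) there exists x ∈ Fix T_{γ*} such that both (x_n)_{n∈ℕ} and (T_{γ_n}x_n)_{n∈ℕ} converge R-linearly to x. -/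
variable {H : Type*}

theorem aux_geom (d a : ℕ → ℝ) (b r : ℝ) (hd : ∀ n, 0 ≤ d n) (hr : 0 < r) (hbr : b < r)
    (ha : Filter.Tendsto a Filter.atTop (nhds b)) (h : ∀ n, d (n + 1) ≤ a n * d n) :
    ∃ C : ℝ, 0 ≤ C ∧ ∀ n, d n ≤ C * r ^ n := by
  obtain ⟨N, hN⟩ := Filter.eventually_atTop.1 (ha.eventually (gt_mem_nhds hbr))
  have hnn : ∀ i ∈ Finset.range (N + 1), 0 ≤ d i / r ^ i := fun i _ =>
    div_nonneg (hd i) (pow_pos hr i).le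
  have hsmall : ∀ n ≤ N, d n ≤ (∑ i ∈ Finset.range (N + 1), d i / r ^ i) * r ^ n := by
    intro n hn
    have h1 := Finset.single_le_sum hnn (Finset.mem_range.2 (Nat.lt_succ_of_le hn))
    exact (div_le_iff₀ (pow_pos hr n)).1 h1
  refine ⟨∑ i ∈ Finset.range (N + 1), d i / r ^ i, Finset.sum_nonneg hnn, fun n => ?_⟩
  rcases le_total n N with hn | hn
  · exact hsmall n hn
  · induction n, hn using Nat.le_induction with
    | base => exact hsmall N le_rfl
    | succ n hn ih =>
      calc d (n + 1) ≤ a n * d n := h n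
        _ ≤ r * d n := mul_le_mul_of_nonneg_right (hN n hn).le (hd n)
        _ ≤ r * ((∑ i ∈ Finset.range (N + 1), d i / r ^ i) * r ^ n) :=
          mul_le_mul_of_nonneg_left ih hr.le
        _ = _ := by ring

/-- for a family of `β`-contractions, the relocated fixed-point
iterates satisfy: the distances to the fixed-point sets converge `R`-linearly to zero,
and `(x_n)` and `(T_{γ_n} x_n)` converge `R`-linearly to a common fixed point of
`T_{γ*}`. -/
theorem stmt9 [NormedAddCommGroup H] [InnerProductSpace ℝ H] [CompleteSpace H]
    (Γ : Set ℝ) (hΓne : Γ.Nonempty) (hΓ : Γ ⊆ Set.Ioi (0 : ℝ))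
    (β : ℝ) (hβ : β ∈ Set.Ico (0 : ℝ) 1)
    (T : ℝ → H → H) (hT : ∀ γ ∈ Γ, ∀ x y : H, ‖T γ x - T γ y‖ ≤ β * ‖x - y‖)
    (hFix : ∀ γ ∈ Γ, (FixSet (T γ)).Nonempty)
    (Q : ℝ → ℝ → H → H) (L : ℝ → ℝ → ℝ)
    (hQ : IsRelocators Γ T Q L)
    (hA : AssumptionA Γ T Q)
    (hcont : ContinuousOn (fun p : H × ℝ => T p.2 p.1) (Set.univ ×ˢ Γ))
    (γseq : ℕ → ℝ) (hγmem : ∀ n, γseq n ∈ Γ)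
    (γs : ℝ) (hγs : γs ∈ Γ) (hγlin : RLinearTo γseq γs)
    (hsum : Summable fun n => L (γseq (n + 1)) (γseq n) - 1)
    (x : ℕ → H)
    (hrec : ∀ n : ℕ, x (n + 1) = Q (γseq (n + 1)) (γseq n) (T (γseq n) (x n))) :
    (∃ C : ℝ, 0 ≤ C ∧ ∃ r ∈ Set.Ioo (0 : ℝ) 1, ∀ n : ℕ,
      Metric.infDist (x n) (FixSet (T (γseq n))) ≤ C * r ^ n) ∧
    ∃ xs : H, xs ∈ FixSet (T γs) ∧ RLinearTo x xs ∧
      RLinearTo (fun n => T (γseq n) (x n)) xs := by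
  obtain ⟨hbij, _, hcomp, hLip⟩ := hQ
  obtain ⟨hβ0, hβ1⟩ := hβ
  obtain ⟨p, hp⟩ := hFix γs hγs
  obtain ⟨K, hK, hKA⟩ := hA {(p, γs)} (by
    rintro _ rfl
    simp only [Set.mem_iUnion]
    exact ⟨γs, hγs, hp, rfl⟩) Bornology.isBounded_singleton
  have hf : ∀ n, Q (γseq n) γs p ∈ FixSet (T (γseq n)) := fun n =>
    (hbij γs hγs _ (hγmem n)).mapsTo hp
  have hTd : ∀ n, ‖T (γseq n) (x n) - Q (γseq n) γs p‖ ≤ β * ‖x n - Q (γseq n) γs p‖ := by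
    intro n
    have h1 := hT _ (hγmem n) (x n) (Q (γseq n) γs p)
    have h2 : T (γseq n) (Q (γseq n) γs p) = Q (γseq n) γs p := hf n
    rwa [h2] at h1
  have hlim : Filter.Tendsto (fun n => L (γseq (n + 1)) (γseq n) * β) Filter.atTop (nhds β) := by
    have h1 := (hsum.tendsto_atTop_zero.add_const 1).mul_const β
    simpa using h1
  have hstep : ∀ n, ‖x (n + 1) - Q (γseq (n + 1)) γs p‖ ≤
      L (γseq (n + 1)) (γseq n) * β * ‖x n - Q (γseq n) γs p‖ := by
    intro n
    obtain ⟨hL1, hL2⟩ := hLip _ (hγmem n) _ (hγmem (n + 1))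
    rw [hrec n, ← hcomp γs hγs _ (hγmem n) _ (hγmem (n + 1)) p hp, mul_assoc]
    exact (hL2 _ _).trans (mul_le_mul_of_nonneg_left (hTd n) (by linarith))
  obtain ⟨D, hD, hDn⟩ := aux_geom (fun n => ‖x n - Q (γseq n) γs p‖)
    (fun n => L (γseq (n + 1)) (γseq n) * β) β ((1 + β) / 2) (fun n => norm_nonneg _)
    (by linarith) (by linarith) hlim hstep
  obtain ⟨G, hG, s, ⟨hs0, hs1⟩, hGn⟩ := hγlin
  have hr0 : (0 : ℝ) < (1 + β) / 2 := by linarith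
  have hr1 : (1 + β) / 2 < (1 : ℝ) := by linarith
  refine ⟨⟨D, hD, (1 + β) / 2, ⟨hr0, hr1⟩, fun n => ?_⟩, Q γs γs p,
    (hbij γs hγs γs hγs).mapsTo hp, ?_⟩
  · refine (Metric.infDist_le_dist_of_mem (hf n)).trans ?_
    rw [dist_eq_norm]
    exact hDn n
  have hmain : ∀ y : ℕ → H, (∀ n, ‖y n - Q (γseq n) γs p‖ ≤ ‖x n - Q (γseq n) γs p‖) →
      RLinearTo y (Q γs γs p) := by
    intro y hy
    refine ⟨D + K * G, by positivity, max ((1 + β) / 2) s,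
      ⟨lt_max_of_lt_left hr0, max_lt hr1 hs1⟩, fun n => ?_⟩
    have h1 : ‖Q (γseq n) γs p - Q γs γs p‖ ≤ K * |γseq n - γs| := hKA _ (hγmem n) _ rfl
    have h2 : |γseq n - γs| ≤ G * s ^ n := hGn n
    have h3 : ((1 + β) / 2) ^ n ≤ (max ((1 + β) / 2) s) ^ n :=
      pow_le_pow_left₀ hr0.le (le_max_left _ _) n
    have h4 : s ^ n ≤ (max ((1 + β) / 2) s) ^ n := pow_le_pow_left₀ hs0.le (le_max_right _ _) n
    have h5 := norm_sub_le_norm_sub_add_norm_sub (y n) (Q (γseq n) γs p) (Q γs γs p)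
    have h6 := hDn n
    have h7 := mul_le_mul_of_nonneg_left h3 hD
    have h8 := mul_le_mul_of_nonneg_left h4 (mul_nonneg hK.le hG)
    have h9 := mul_le_mul_of_nonneg_left h2 hK.le
    have h10 := hy n
    linarith
  refine ⟨hmain x fun n => le_rfl, hmain _ fun n => (hTd n).trans ?_⟩
  exact mul_le_of_le_one_left (norm_nonneg _) hβ1.le
end

section
/- Let H be a real Hilbert space and Γ ⊆ (0,∞) a nonempty closed interval. Suppose A₁ : H → H is (single-valued) monotone and L-Lipschitz, and A₂ : H ⇉ H is maximally monotone and μ-strongly monotone. Let T_γ := Id − J_{γA₁} + J_{γA₂} ∘ (2J_{γA₁} − Id) denote the Douglas–Rachford operator. Then there exists β ∈ [0,1) such that for every γ ∈ Γ, T_γ is a β-contraction, i.e., ‖T_γx − T_γy‖ ≤ β‖x − y‖ for all x,y ∈ H. -/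
open scoped Pointwise RealInnerProductSpace

variable {H : Type*}

/-- A set-valued operator is `μ`-strongly monotone. -/
def SVStrongMonotone [NormedAddCommGroup H] [InnerProductSpace ℝ H]
    (μ : ℝ) (A : H → Set H) : Prop :=
  ∀ ⦃x y u v : H⦄, u ∈ A x → v ∈ A y → μ * ‖x - y‖ ^ 2 ≤ ⟪x - y, u - v⟫

lemma dr_key [NormedAddCommGroup H] [InnerProductSpace ℝ H] (m k : ℝ) (hm : 0 < m) (hk : 0 ≤ k)
    (p q r : H) (hpq : 0 ≤ ⟪p, q⟫) (hq : ‖q‖ ≤ k * ‖p‖) (hr : m * ‖r‖ ^ 2 ≤ ⟪r, p - q - r⟫) :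
    2 * m * ‖p + q‖ ^ 2 ≤ (2 * m + 1) * (1 + k) ^ 2 * (‖p + q‖ ^ 2 - ‖q + r‖ ^ 2) := by
  have h1 : ‖p + q‖ ^ 2 - ‖q + r‖ ^ 2 = ‖p - r‖ ^ 2 + 2 * ⟪p, q⟫ + 2 * ⟪r, p - q - r⟫ := by
    rw [norm_add_sq_real, norm_add_sq_real, norm_sub_sq_real, inner_sub_right, inner_sub_right,
      real_inner_self_eq_norm_sq, real_inner_comm p r, real_inner_comm q r]
    ring
  have h2 : ‖p‖ ≤ ‖p - r‖ + ‖r‖ := by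
    simpa using norm_add_le (p - r) r
  have h3 : ‖p + q‖ ≤ (1 + k) * ‖p‖ := by
    have := norm_add_le p q
    linarith
  have h4 : ‖p‖ ^ 2 ≤ (‖p - r‖ + ‖r‖) ^ 2 := pow_le_pow_left₀ (norm_nonneg _) h2 2
  have h5 : ‖p + q‖ ^ 2 ≤ ((1 + k) * ‖p‖) ^ 2 := pow_le_pow_left₀ (norm_nonneg _) h3 2
  have h6 : 2 * m * ‖p‖ ^ 2 ≤ (2 * m + 1) * (‖p - r‖ ^ 2 + 2 * m * ‖r‖ ^ 2) := by
    have := mul_le_mul_of_nonneg_left h4 (by positivity : 0 ≤ 2 * m)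
    nlinarith [sq_nonneg (‖p - r‖ - 2 * m * ‖r‖)]
  have h7 : ‖p - r‖ ^ 2 + 2 * m * ‖r‖ ^ 2 ≤ ‖p + q‖ ^ 2 - ‖q + r‖ ^ 2 := by
    rw [h1]; linarith
  calc 2 * m * ‖p + q‖ ^ 2 ≤ 2 * m * ((1 + k) * ‖p‖) ^ 2 := by gcongr
    _ = (1 + k) ^ 2 * (2 * m * ‖p‖ ^ 2) := by ring
    _ ≤ (1 + k) ^ 2 * ((2 * m + 1) * (‖p + q‖ ^ 2 - ‖q + r‖ ^ 2)) := by
      have : 0 ≤ (1 + k) ^ 2 := by positivity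
      refine mul_le_mul_of_nonneg_left (h6.trans ?_) this
      exact mul_le_mul_of_nonneg_left h7 (by positivity)
    _ = _ := by ring

/-- if `A₁` is single-valued, monotone and `L`-Lipschitz and `A₂` is
maximally monotone and `μ`-strongly monotone, then there is `β ∈ [0,1)` such that the
Douglas–Rachford operator `T_γ` is a `β`-contraction for every `γ` in the closed
interval `Γ = [a,b] ⊆ (0,∞)`. -/
theorem stmt13 [NormedAddCommGroup H] [InnerProductSpace ℝ H] [CompleteSpace H]
    (a b : ℝ) (ha : 0 < a) (hab : a ≤ b)
    (L μ : ℝ) (hL : 0 ≤ L) (hμ : 0 < μ)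
    (A₁ : H → H)
    (hA₁mono : ∀ x y : H, 0 ≤ ⟪x - y, A₁ x - A₁ y⟫)
    (hA₁lip : ∀ x y : H, ‖A₁ x - A₁ y‖ ≤ L * ‖x - y‖)
    (A₂ : H → Set H) (hA₂ : MaxMonotone A₂) (hA₂s : SVStrongMonotone μ A₂)
    (J₁ : ℝ → H → H)
    (hJ₁ : ∀ γ : ℝ, 0 < γ → ∀ x : H, x - J₁ γ x = γ • A₁ (J₁ γ x))
    (J₂ : ℝ → H → H)
    (hJ₂ : ∀ γ : ℝ, 0 < γ → IsResolventOf A₂ γ (J₂ γ))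
    (T : ℝ → H → H)
    (hT : ∀ (γ : ℝ) (x : H), T γ x = x - J₁ γ x + J₂ γ ((2 : ℝ) • J₁ γ x - x)) :
    ∃ β : ℝ, β ∈ Set.Ico (0 : ℝ) 1 ∧
      ∀ γ ∈ Set.Icc a b, ∀ x y : H, ‖T γ x - T γ y‖ ≤ β * ‖x - y‖ := by
  have hb : 0 < b := ha.trans_le hab
  have hm : 0 < a * μ := mul_pos ha hμ
  have hk : 0 ≤ b * L := mul_nonneg hb.le hL
  set m := a * μ with hmdef
  set k := b * L with hkdef
  set K := (2 * m + 1) * (1 + k) ^ 2 with hK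
  have hKm : 2 * m ≤ K := by
    have : 1 ≤ (1 + k) ^ 2 := by nlinarith
    nlinarith
  have hK0 : 0 < K := by positivity
  have hc0 : 0 < 2 * m / K := by positivity
  have hc1 : 2 * m / K ≤ 1 := (div_le_one hK0).2 hKm
  refine ⟨√(1 - 2 * m / K), ⟨Real.sqrt_nonneg _, ?_⟩, ?_⟩
  · rw [Real.sqrt_lt' one_pos]; linarith
  intro γ hγ x y
  have hγ0 : 0 < γ := ha.trans_le hγ.1
  obtain ⟨u, hu, hu'⟩ := hJ₂ γ hγ0 ((2 : ℝ) • J₁ γ x - x)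
  obtain ⟨v, hv, hv'⟩ := hJ₂ γ hγ0 ((2 : ℝ) • J₁ γ y - y)
  have hs := hA₂s hu hv
  have hx := hJ₁ γ hγ0 x
  have hy := hJ₁ γ hγ0 y
  have hTx := hT γ x
  have hTy := hT γ y
  simp only at hu' hv'
  generalize J₂ γ ((2 : ℝ) • J₁ γ x - x) = rx at *
  generalize J₂ γ ((2 : ℝ) • J₁ γ y - y) = ry at *
  have hmon := hA₁mono (J₁ γ x) (J₁ γ y)
  have hlip := hA₁lip (J₁ γ x) (J₁ γ y)
  generalize J₁ γ x = px at *
  generalize J₁ γ y = py at *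
  have key := dr_key m k hm hk (px - py) (γ • (A₁ px - A₁ py)) (rx - ry) ?_ ?_ ?_
  · have e1 : px - py + γ • (A₁ px - A₁ py) = x - y := by
      rw [smul_sub, ← hx, ← hy]; abel
    have e2 : γ • (A₁ px - A₁ py) + (rx - ry) = T γ x - T γ y := by
      rw [smul_sub, ← hx, ← hy, hTx, hTy]; abel
    rw [e1, e2, ← hK] at key
    have h8 : 2 * m / K * ‖x - y‖ ^ 2 ≤ ‖x - y‖ ^ 2 - ‖T γ x - T γ y‖ ^ 2 := by
      rw [div_mul_eq_mul_div, div_le_iff₀ hK0]; linarith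
    refine abs_le_of_sq_le_sq' ?_ (by positivity) |>.2
    rw [mul_pow, Real.sq_sqrt (by linarith)]
    linarith
  · rw [inner_smul_right]; positivity
  · rw [norm_smul, Real.norm_of_nonneg hγ0.le, hkdef, mul_assoc]
    exact mul_le_mul hγ.2 hlip (norm_nonneg _) hb.le
  · have e3 : px - py - γ • (A₁ px - A₁ py) - (rx - ry) = γ • (u - v) := by
      rw [smul_sub, smul_sub, hu', hv', ← hx, ← hy, two_smul, two_smul]; abel
    rw [e3, inner_smul_right, hmdef, mul_assoc]
    exact mul_le_mul hγ.1 hs (by positivity) hγ0.le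
end

section
/- Let H be a real Hilbert space and Γ ⊆ (0,∞) a nonempty closed interval. Suppose A₁ : H → H is maximally monotone and L-Lipschitz, and A₂ : H ⇉ H is maximally monotone and μ-strongly monotone, with P := zer(A₁ + A₂) ≠ ∅. Set D := zer(A₁⁻¹ − A₂⁻¹ ∘ (−Id)). Let (γ_n)_{n∈ℕ} ⊆ Γ converge R-linearly to γ* ∈ Γ and let T_γ := Id − J_{γA₁} + J_{γA₂} ∘ (2J_{γA₁} − Id). Given x₀ ∈ H, set z₀ = J_{γ₀A₁}x₀ and for each n ∈ ℕ define y_n = J_{γ_nA₂}(2z_n − x_n), w_n = x_n − z_n + y_n, z_{n+1} = J_{γ_nA₁}w_n, and x_{n+1} = (γ_{n+1}/γ_n)w_n + (1 − γ_{n+1}/γ_n)z_{n+1}. Then: (i) (x_n) and (w_n) converge R-linearly to the same point x ∈ Fix T_{γ*}; (ii) (z_n) and (y_n) converge R-linearly to the same point z := J_{γ*A₁}x, and z ∈ P; (iii) ((x_n − z_n)/γ_n) and ((w_n − y_n)/γ_n) converge R-linearly to g := (x − z)/γ*, and g ∈ D. -/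
open scoped Pointwise RealInnerProductSpace

variable {H : Type*}

theorem aux_seq (E δ : ℕ → ℝ) (κ : ℝ) (hE : ∀ n, 0 ≤ E n) (h0 : 0 < κ) (h1 : κ < 1)
    (hδ : Filter.Tendsto δ Filter.atTop (nhds 0))
    (h : ∀ n, E (n+1) ≤ (1 + δ n) * (κ * E n)) :
    ∃ C : ℝ, 0 ≤ C ∧ ∃ r ∈ Set.Ioo (0 : ℝ) 1, ∀ n : ℕ, E n ≤ C * r ^ n := by
  set r := (1 + κ) / 2 with hr
  have hr0 : 0 < r := by rw [hr]; linarith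
  have hr1 : r < 1 := by rw [hr]; linarith
  have hκr : κ < r := by rw [hr]; linarith
  have hlim : Filter.Tendsto (fun n => (1 + δ n) * κ) Filter.atTop (nhds κ) := by
    have := (hδ.const_add 1).mul_const κ
    simpa using this
  obtain ⟨N, hN⟩ := Filter.eventually_atTop.1 (hlim.eventually (gt_mem_nhds hκr))
  have hnn : ∀ k, 0 ≤ E k / r ^ k := fun k => div_nonneg (hE k) (pow_nonneg hr0.le k)
  refine ⟨∑ k ∈ Finset.range (N+1), E k / r ^ k, Finset.sum_nonneg fun k _ => hnn k,
    r, ⟨hr0, hr1⟩, ?_⟩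
  have hsm : ∀ n ≤ N, E n ≤ (∑ k ∈ Finset.range (N+1), E k / r ^ k) * r ^ n := by
    intro n hn
    rw [← div_le_iff₀ (pow_pos hr0 n)]
    exact Finset.single_le_sum (f := fun k => E k / r ^ k) (fun k _ => hnn k)
      (Finset.mem_range.2 (by omega))
  intro n
  induction n with
  | zero => exact hsm 0 (Nat.zero_le _)
  | succ n ih =>
    by_cases hn : n + 1 ≤ N
    · exact hsm _ hn
    · calc E (n+1) ≤ ((1 + δ n) * κ) * E n := by rw [mul_assoc]; exact h n
        _ ≤ r * E n := mul_le_mul_of_nonneg_right (hN n (by omega)).le (hE n)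
        _ ≤ r * ((∑ k ∈ Finset.range (N+1), E k / r ^ k) * r ^ n) :=
            mul_le_mul_of_nonneg_left ih hr0.le
        _ = _ := by ring

theorem aux_contr_s14 [NormedAddCommGroup H] [InnerProductSpace ℝ H] (d e f : H) (m M m0 : ℝ)
    (hm0 : 0 < m0) (hm : m0 ≤ m) (hM : 0 ≤ M) (hde : 0 ≤ ⟪d, e⟫) (he : ‖e‖ ≤ M * ‖d‖)
    (hf : m * ‖f‖ ^ 2 ≤ ⟪f, d - e - f⟫) :
    ‖e + f‖ ^ 2 ≤ (1 - (2 * m0 / (1 + 2 * m0)) / (1 + M) ^ 2) * ‖d + e‖ ^ 2 := by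
  have h1 : ‖e + f‖ ^ 2 = ‖e‖ ^ 2 + 2 * ⟪e, f⟫ + ‖f‖ ^ 2 := norm_add_sq_real e f
  have h2 : ‖d + e‖ ^ 2 = ‖d‖ ^ 2 + 2 * ⟪d, e⟫ + ‖e‖ ^ 2 := norm_add_sq_real d e
  have h3 : ⟪f, d - e - f⟫ = ⟪d, f⟫ - ⟪e, f⟫ - ‖f‖ ^ 2 := by
    rw [inner_sub_right, inner_sub_right, real_inner_self_eq_norm_sq, real_inner_comm f d,
      real_inner_comm f e]
  have h4 : ⟪d, f⟫ ≤ ‖d‖ * ‖f‖ := real_inner_le_norm d f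
  have hd := norm_nonneg d
  have hfn := norm_nonneg f
  have h5 : (2 * m0 / (1 + 2 * m0)) * ‖d‖ ^ 2 ≤ ‖d + e‖ ^ 2 - ‖e + f‖ ^ 2 := by
    have h6 : (2 * m0 / (1 + 2 * m0)) * ‖d‖ ^ 2 ≤
        ‖d‖ ^ 2 - 2 * (‖d‖ * ‖f‖) + ‖f‖ ^ 2 + 2 * m0 * ‖f‖ ^ 2 := by
      rw [div_mul_eq_mul_div, div_le_iff₀ (by positivity)]
      nlinarith [sq_nonneg (‖d‖ - (1 + 2 * m0) * ‖f‖)]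
    have h7 : m0 * ‖f‖ ^ 2 ≤ m * ‖f‖ ^ 2 := mul_le_mul_of_nonneg_right hm (sq_nonneg _)
    nlinarith
  have h8 : ‖d + e‖ ≤ (1 + M) * ‖d‖ := by linarith [norm_add_le d e]
  have h9 : ‖d + e‖ ^ 2 ≤ (1 + M) ^ 2 * ‖d‖ ^ 2 := by
    rw [← mul_pow]; exact pow_le_pow_left₀ (norm_nonneg _) h8 2
  have h10 : (2 * m0 / (1 + 2 * m0)) / (1 + M) ^ 2 * ‖d + e‖ ^ 2 ≤
      (2 * m0 / (1 + 2 * m0)) * ‖d‖ ^ 2 := by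
    rw [div_mul_eq_mul_div, div_le_iff₀ (by positivity), mul_assoc, mul_comm (‖d‖ ^ 2)]
    exact mul_le_mul_of_nonneg_left h9 (by positivity)
  linarith

theorem aux_split [NormedAddCommGroup H] [InnerProductSpace ℝ H] (d e : H)
    (hde : 0 ≤ ⟪d, e⟫) : ‖d‖ ≤ ‖d + e‖ ∧ ‖e‖ ≤ ‖d + e‖ := by
  have h2 : ‖d + e‖ ^ 2 = ‖d‖ ^ 2 + 2 * ⟪d, e⟫ + ‖e‖ ^ 2 := norm_add_sq_real d e
  constructor
  · refine (sq_le_sq₀ (norm_nonneg _) (norm_nonneg _)).1 ?_; nlinarith [sq_nonneg ‖e‖]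
  · refine (sq_le_sq₀ (norm_nonneg _) (norm_nonneg _)).1 ?_; nlinarith [sq_nonneg ‖d‖]

/-- linear convergence of the relocated Douglas–Rachford algorithm
when `A₁` is single-valued, maximally monotone and `L`-Lipschitz and `A₂` is maximally
monotone and `μ`-strongly monotone with `zer(A₁+A₂) ≠ ∅`: the iterates `(x_n)`, `(w_n)`
converge `R`-linearly to a fixed point `x` of `T_{γ*}`, the shadows `(z_n)`, `(y_n)`
converge `R`-linearly to `z = J_{γ*A₁}x ∈ P`, and `((x_n−z_n)/γ_n)`, `((w_n−y_n)/γ_n)`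
converge `R`-linearly to `g = (x−z)/γ* ∈ D`. -/
theorem stmt14 [NormedAddCommGroup H] [InnerProductSpace ℝ H] [CompleteSpace H]
    (a b : ℝ) (ha : 0 < a) (hab : a ≤ b)
    (L μ : ℝ) (hL : 0 ≤ L) (hμ : 0 < μ)
    (A₁ : H → H)
    (hA₁max : MaxMonotone (fun p => ({A₁ p} : Set H)))
    (hA₁lip : ∀ x y : H, ‖A₁ x - A₁ y‖ ≤ L * ‖x - y‖)
    (A₂ : H → Set H) (hA₂ : MaxMonotone A₂) (hA₂s : SVStrongMonotone μ A₂)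
    (hPne : ({p : H | (0 : H) ∈ ({A₁ p} : Set H) + A₂ p}).Nonempty)
    (J₁ : ℝ → H → H)
    (hJ₁ : ∀ γ : ℝ, 0 < γ → ∀ x : H, x - J₁ γ x = γ • A₁ (J₁ γ x))
    (J₂ : ℝ → H → H)
    (hJ₂ : ∀ γ : ℝ, 0 < γ → IsResolventOf A₂ γ (J₂ γ))
    (T : ℝ → H → H)
    (hT : ∀ (γ : ℝ) (x : H), T γ x = x - J₁ γ x + J₂ γ ((2 : ℝ) • J₁ γ x - x))
    (γseq : ℕ → ℝ) (hγmem : ∀ n, γseq n ∈ Set.Icc a b)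
    (γs : ℝ) (hγs : γs ∈ Set.Icc a b) (hγlin : RLinearTo γseq γs)
    (x z y w : ℕ → H)
    (hz0 : z 0 = J₁ (γseq 0) (x 0))
    (hy : ∀ n : ℕ, y n = J₂ (γseq n) ((2 : ℝ) • z n - x n))
    (hw : ∀ n : ℕ, w n = x n - z n + y n)
    (hz : ∀ n : ℕ, z (n + 1) = J₁ (γseq n) (w n))
    (hx : ∀ n : ℕ, x (n + 1) =
      (γseq (n + 1) / γseq n) • w n + (1 - γseq (n + 1) / γseq n) • z (n + 1)) :
    ∃ xs : H, xs ∈ FixSet (T γs) ∧ RLinearTo x xs ∧ RLinearTo w xs ∧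
      J₁ γs xs ∈ {p : H | (0 : H) ∈ ({A₁ p} : Set H) + A₂ p} ∧
      RLinearTo z (J₁ γs xs) ∧ RLinearTo y (J₁ γs xs) ∧
      γs⁻¹ • (xs - J₁ γs xs) ∈
        {q : H | (0 : H) ∈ SVInv (fun p => ({A₁ p} : Set H)) q - SVInv A₂ (-q)} ∧
      RLinearTo (fun n => (γseq n)⁻¹ • (x n - z n)) (γs⁻¹ • (xs - J₁ γs xs)) ∧
      RLinearTo (fun n => (γseq n)⁻¹ • (w n - y n)) (γs⁻¹ • (xs - J₁ γs xs)) := by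
  have hmono : ∀ p q : H, 0 ≤ ⟪p - q, A₁ p - A₁ q⟫ := fun p q =>
    hA₁max.1 (x := p) (y := q) (u := A₁ p) (v := A₁ q) rfl rfl
  obtain ⟨p, hp⟩ := hPne
  have hp2 : -A₁ p ∈ A₂ p := by
    obtain ⟨s, hs, t, ht, hst⟩ := Set.mem_add.1 hp
    rw [Set.mem_singleton_iff] at hs
    subst hs
    rwa [← eq_neg_of_add_eq_zero_right hst]
  have hγp : ∀ n, 0 < γseq n := fun n => lt_of_lt_of_le ha (hγmem n).1
  have hγsp : 0 < γs := lt_of_lt_of_le ha hγs.1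
  -- resolvent at the limit
  have hJp : J₁ γs (p + γs • A₁ p) = p := by
    set q := J₁ γs (p + γs • A₁ p) with hq
    have h1 := hJ₁ γs hγsp (p + γs • A₁ p)
    rw [← hq] at h1
    have h2 : p - q = -(γs • (A₁ p - A₁ q)) := by
      rw [smul_sub, ← h1]; abel
    have h3 : ‖p - q‖ ^ 2 = -(γs * ⟪p - q, A₁ p - A₁ q⟫) := by
      rw [← real_inner_self_eq_norm_sq]
      nth_rewrite 2 [h2]
      rw [inner_neg_right, real_inner_smul_right]
    have h4 : ‖p - q‖ ^ 2 ≤ 0 := by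
      rw [h3]; linarith [mul_nonneg hγsp.le (hmono p q)]
    have h5 : ‖p - q‖ = 0 := by nlinarith [norm_nonneg (p - q)]
    exact (sub_eq_zero.1 (norm_eq_zero.1 h5)).symm
  have hJ2 : ∀ γ, 0 < γ → ∀ t : H,
      γ * μ * ‖J₂ γ t - p‖ ^ 2 ≤ ⟪J₂ γ t - p, t - J₂ γ t + γ • A₁ p⟫ := by
    intro γ hγ t
    obtain ⟨v, hv, hvt⟩ := Set.mem_smul_set.1 (hJ₂ γ hγ t)
    have h1 := hA₂s hv hp2
    rw [← hvt, ← smul_add, real_inner_smul_right, mul_assoc]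
    rw [sub_neg_eq_add] at h1
    exact mul_le_mul_of_nonneg_left h1 hγ.le
  have hJ2p : J₂ γs ((2 : ℝ) • p - (p + γs • A₁ p)) = p := by
    have h1 := hJ2 γs hγsp ((2 : ℝ) • p - (p + γs • A₁ p))
    set q := J₂ γs ((2 : ℝ) • p - (p + γs • A₁ p)) with hq
    have h2 : (2 : ℝ) • p - (p + γs • A₁ p) - q + γs • A₁ p = -(q - p) := by
      rw [two_smul]; abel
    rw [h2, inner_neg_right, real_inner_self_eq_norm_sq] at h1
    have h3 : 0 ≤ γs * μ * ‖q - p‖ ^ 2 := by positivity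
    have h5 : ‖q - p‖ = 0 := by nlinarith [norm_nonneg (q - p)]
    exact sub_eq_zero.1 (norm_eq_zero.1 h5)
  -- x n in terms of z n
  have hwz : ∀ n, w n - z (n+1) = γseq n • A₁ (z (n+1)) := by
    intro n; rw [hz n]; exact hJ₁ _ (hγp n) _
  have hxz : ∀ n, x n - z n = γseq n • A₁ (z n) := by
    intro n
    cases n with
    | zero => rw [hz0]; exact hJ₁ _ (hγp 0) _
    | succ n =>
      have h1 : x (n+1) - z (n+1) = (γseq (n+1) / γseq n) • (w n - z (n+1)) := by
        rw [hx n]; module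
      rw [h1, hwz, smul_smul, div_mul_cancel₀ _ (hγp n).ne']
  have hinn : ∀ γ : ℝ, 0 < γ → ∀ q : H, 0 ≤ ⟪q - p, γ • (A₁ q - A₁ p)⟫ := by
    intro γ hγ q
    rw [real_inner_smul_right]
    exact mul_nonneg hγ.le (hmono q p)
  have hxd : ∀ n, x n - (p + γseq n • A₁ p) = (z n - p) + γseq n • (A₁ (z n) - A₁ p) := by
    intro n
    rw [smul_sub, ← hxz n]; abel
  have hwd : ∀ n, w n - (p + γseq n • A₁ p) =
      (z (n+1) - p) + γseq n • (A₁ (z (n+1)) - A₁ p) := by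
    intro n
    rw [smul_sub, ← hwz n]; abel
  have hwd2 : ∀ n, w n - (p + γseq n • A₁ p) =
      γseq n • (A₁ (z n) - A₁ p) + (y n - p) := by
    intro n
    rw [smul_sub, ← hxz n, hw n]; abel
  set E : ℕ → ℝ := fun n => ‖x n - (p + γseq n • A₁ p)‖ with hE
  have hE0 : ∀ n, 0 ≤ E n := fun n => norm_nonneg _
  have hbL : 0 ≤ b * L := mul_nonneg (ha.le.trans hab) hL
  set m0 := a * μ with hm0
  have hm0p : 0 < m0 := mul_pos ha hμ
  set K := 1 - (2 * m0 / (1 + 2 * m0)) / (1 + b * L) ^ 2 with hK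
  have hc1 : 2 * m0 / (1 + 2 * m0) < 1 := by
    rw [div_lt_one (by positivity)]; linarith
  have hq0 : 0 < (2 * m0 / (1 + 2 * m0)) / (1 + b * L) ^ 2 := by positivity
  have hq1 : (2 * m0 / (1 + 2 * m0)) / (1 + b * L) ^ 2 < 1 := by
    rw [div_lt_one (by positivity)]; nlinarith
  have hK0 : 0 < K := by rw [hK]; linarith
  have hK1 : K < 1 := by rw [hK]; linarith
  have hWE : ∀ n, ‖w n - (p + γseq n • A₁ p)‖ ≤ √K * E n := by
    intro n
    have h1 : ‖γseq n • (A₁ (z n) - A₁ p) + (y n - p)‖ ^ 2 ≤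
        K * ‖(z n - p) + γseq n • (A₁ (z n) - A₁ p)‖ ^ 2 := by
      refine aux_contr_s14 (z n - p) (γseq n • (A₁ (z n) - A₁ p)) (y n - p) (γseq n * μ) (b * L) m0
        hm0p (mul_le_mul_of_nonneg_right (hγmem n).1 hμ.le) hbL (hinn _ (hγp n) _) ?_ ?_
      · rw [norm_smul, Real.norm_of_nonneg (hγp n).le, mul_assoc]
        exact mul_le_mul (hγmem n).2 (hA₁lip _ _) (norm_nonneg _) (ha.le.trans hab)
      · have h2 := hJ2 (γseq n) (hγp n) ((2 : ℝ) • z n - x n)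
        rw [← hy n] at h2
        have h3 : (2 : ℝ) • z n - x n - y n + γseq n • A₁ p =
            z n - p - γseq n • (A₁ (z n) - A₁ p) - (y n - p) := by
          rw [smul_sub, ← hxz n, two_smul]; abel
        rwa [h3] at h2
    rw [← hwd2, ← hxd] at h1
    refine (sq_le_sq₀ (norm_nonneg _) (mul_nonneg (Real.sqrt_nonneg _) (hE0 n))).1 ?_
    rw [mul_pow, Real.sq_sqrt hK0.le]
    exact h1
  have hsK0 : 0 < √K := Real.sqrt_pos.2 hK0
  have hsK1 : √K < 1 := by rw [Real.sqrt_lt' one_pos]; simpa using hK1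
  have hstep : ∀ n, E (n+1) ≤ (1 + |γseq (n+1) / γseq n - 1|) * (√K * E n) := by
    intro n
    have h1 : x (n+1) - (p + γseq (n+1) • A₁ p) = (w n - (p + γseq n • A₁ p)) +
        (γseq (n+1) / γseq n - 1) • (γseq n • (A₁ (z (n+1)) - A₁ p)) := by
      rw [hxd, hwd, smul_smul, sub_mul, div_mul_cancel₀ _ (hγp n).ne']
      module
    have h2 := (aux_split _ _ (hinn _ (hγp n) (z (n+1)))).2
    rw [← hwd] at h2
    calc E (n+1) ≤ ‖w n - (p + γseq n • A₁ p)‖ +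
          |γseq (n+1) / γseq n - 1| * ‖γseq n • (A₁ (z (n+1)) - A₁ p)‖ := by
            simp only [hE]
            rw [h1]
            refine (norm_add_le _ _).trans ?_
            rw [norm_smul (γseq (n+1) / γseq n - 1), Real.norm_eq_abs]
      _ ≤ ‖w n - (p + γseq n • A₁ p)‖ +
          |γseq (n+1) / γseq n - 1| * ‖w n - (p + γseq n • A₁ p)‖ := by gcongr
      _ = (1 + |γseq (n+1) / γseq n - 1|) * ‖w n - (p + γseq n • A₁ p)‖ := by ring
      _ ≤ _ := mul_le_mul_of_nonneg_left (hWE n) (by positivity)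
  obtain ⟨C₂, hC₂, r₂, hr₂, hγC⟩ := hγlin
  have hγt : Filter.Tendsto γseq Filter.atTop (nhds γs) := by
    rw [tendsto_iff_norm_sub_tendsto_zero]
    refine squeeze_zero (fun _ => norm_nonneg _) hγC ?_
    simpa using (tendsto_pow_atTop_nhds_zero_of_lt_one hr₂.1.le hr₂.2).const_mul C₂
  have hδ : Filter.Tendsto (fun n => |γseq (n+1) / γseq n - 1|) Filter.atTop (nhds 0) := by
    have h1 := (((hγt.comp (Filter.tendsto_add_atTop_nat 1)).div hγt hγsp.ne').sub_const 1).abs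
    simpa [div_self hγsp.ne'] using h1
  obtain ⟨C₁, hC₁, r₁, hr₁, hEC⟩ := aux_seq E _ (√K) hE0 hsK0 hsK1 hδ hstep
  have key : ∀ (s : ℕ → H) (q : H) (k₁ k₂ : ℝ), 0 ≤ k₁ → 0 ≤ k₂ →
      (∀ n, ‖s n - q‖ ≤ k₁ * E n + k₂ * ‖γseq n - γs‖) → RLinearTo s q := by
    intro s q k₁ k₂ hk₁ hk₂ h
    refine ⟨k₁ * C₁ + k₂ * C₂, by positivity, max r₁ r₂,
      ⟨lt_max_of_lt_left hr₁.1, max_lt hr₁.2 hr₂.2⟩, fun n => (h n).trans ?_⟩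
    have h1 : r₁ ^ n ≤ max r₁ r₂ ^ n := pow_le_pow_left₀ hr₁.1.le (le_max_left _ _) n
    have h2 : r₂ ^ n ≤ max r₁ r₂ ^ n := pow_le_pow_left₀ hr₂.1.le (le_max_right _ _) n
    calc k₁ * E n + k₂ * ‖γseq n - γs‖ ≤ k₁ * (C₁ * r₁ ^ n) + k₂ * (C₂ * r₂ ^ n) := by
          gcongr
          · exact hEC n
          · exact hγC n
      _ ≤ k₁ * (C₁ * max r₁ r₂ ^ n) + k₂ * (C₂ * max r₁ r₂ ^ n) := by gcongr
      _ = _ := by ring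
  have hWE' : ∀ n, ‖w n - (p + γseq n • A₁ p)‖ ≤ E n := fun n =>
    (hWE n).trans (mul_le_of_le_one_left (hE0 n) hsK1.le)
  have hzE : ∀ n, ‖z n - p‖ ≤ E n := by
    intro n
    have := (aux_split _ _ (hinn _ (hγp n) (z n))).1
    rwa [← hxd] at this
  have heE : ∀ n, ‖γseq n • (A₁ (z n) - A₁ p)‖ ≤ E n := by
    intro n
    have := (aux_split _ _ (hinn _ (hγp n) (z n))).2
    rwa [← hxd] at this
  have hg : γs⁻¹ • (p + γs • A₁ p - p) = A₁ p := by
    rw [add_sub_cancel_left, smul_smul, inv_mul_cancel₀ hγsp.ne', one_smul]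
  have hgn : ∀ n, (γseq n)⁻¹ • (x n - z n) = A₁ (z n) := by
    intro n
    rw [hxz, smul_smul, inv_mul_cancel₀ (hγp n).ne', one_smul]
  have hshift : ∀ (n : ℕ) (v : H), ‖v - (p + γs • A₁ p)‖ ≤
      ‖v - (p + γseq n • A₁ p)‖ + ‖A₁ p‖ * ‖γseq n - γs‖ := by
    intro n v
    have h1 : v - (p + γs • A₁ p) = (v - (p + γseq n • A₁ p)) + (γseq n - γs) • A₁ p := by
      module
    rw [h1, mul_comm, ← norm_smul]
    exact norm_add_le _ _
  have hgl : RLinearTo (fun n => A₁ (z n)) (A₁ p) := by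
    refine key _ _ L 0 hL le_rfl fun n => ?_
    rw [zero_mul, add_zero]
    exact (hA₁lip _ _).trans (mul_le_mul_of_nonneg_left (hzE n) hL)
  refine ⟨p + γs • A₁ p, ?_, ?_, ?_, ?_⟩
  · change T γs _ = _
    rw [hT, hJp, hJ2p]; abel
  · refine key _ _ 1 ‖A₁ p‖ zero_le_one (norm_nonneg _) fun n => ?_
    rw [one_mul]; exact hshift n _
  · refine key _ _ 1 ‖A₁ p‖ zero_le_one (norm_nonneg _) fun n => ?_
    rw [one_mul]; exact (hshift n _).trans (by linarith [hWE' n])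
  rw [hJp, hg]
  refine ⟨hp, ?_, ?_, ?_, ?_, ?_⟩
  · refine key _ _ 1 0 zero_le_one le_rfl fun n => ?_
    rw [one_mul, zero_mul, add_zero]; exact hzE n
  · refine key _ _ 2 0 zero_le_two le_rfl fun n => ?_
    have h1 : y n - p = (w n - (p + γseq n • A₁ p)) - γseq n • (A₁ (z n) - A₁ p) := by
      rw [hwd2]; abel
    rw [h1]
    linarith [norm_sub_le (w n - (p + γseq n • A₁ p)) (γseq n • (A₁ (z n) - A₁ p)),
      hWE' n, heE n]
  · exact Set.mem_sub.2 ⟨p, rfl, p, hp2, sub_self p⟩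
  · simp only [hgn]; exact hgl
  · have h1 : ∀ n, w n - y n = x n - z n := fun n => by rw [hw n]; abel
    simp only [h1, hgn]; exact hgl
end
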